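/- (Morris-type recurrence for C_n.) Let n ≥ 2 and let ν = (ν_n,…,ν_1), μ = (μ_n,…,μ_1) ∈ ℤ^n with ν_n ≥ … ≥ ν_1 ≥ 0 and μ_n ≥ … ≥ μ_1 ≥ 0. For k ∈ {1,…,n} set R_k = ν_k + k − μ_n − n and γ_k = (ν_n + 1, ν_{n−1} + 1, …, ν_{k+1} + 1, ν_{k−1}, …, ν_1) ∈ ℤ^{n−1} (a dominant weight of type C_{n−1}), and set μ' = (μ_{n−1},…,μ_1). Then K^{C_n}_{ν,μ}(q) = Σ_{k ∈ {1,…,n}, R_k ≥ 0} (−1)^{n−k} · Σ_{(r,m) ∈ ℕ², r + 2m = R_k} q^{R_k − m} · Σ_λ c^λ_{γ_k,r} · K^{C_{n−1}}_{λ,μ'}(q), where the innermost sum is over all dominant weights λ of type C_{n−1} (only finitely many terms are nonzero). -/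

import Mathlib

open scoped BigOperators

noncomputable section

/-- The `q`-analogue of Kostant's partition function attached to the finite set `R`
of positive roots: the coefficient of `q^k` is the number of families
`(m_α)_{α ∈ R}` of nonnegative integers with `∑ m_α = k` and `∑ m_α • α = β`. -/
def kostantQ {n : ℕ} (R : Finset (Fin n → ℚ)) (β : Fin n → ℚ) : PowerSeries ℤ :=
  PowerSeries.mk fun k =>
    (Nat.card {m : {α // α ∈ R} → ℕ //
      (∑ α, m α) = k ∧ (∑ α, (m α : ℚ) • (α : Fin n → ℚ)) = β} : ℤ)

/-- Positive roots of type `D_n` : `e_i - e_j` and `e_i + e_j` for `j < i`. -/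
def rootsD (n : ℕ) : Finset (Fin n → ℚ) :=
  ((Finset.univ : Finset (Fin n × Fin n)).filter fun p => p.2 < p.1).image
      (fun p => Pi.single p.1 (1 : ℚ) - Pi.single p.2 1) ∪
  ((Finset.univ : Finset (Fin n × Fin n)).filter fun p => p.2 < p.1).image
      (fun p => Pi.single p.1 (1 : ℚ) + Pi.single p.2 1)

/-- Positive roots of type `B_n`. -/
def rootsB (n : ℕ) : Finset (Fin n → ℚ) :=
  rootsD n ∪ (Finset.univ : Finset (Fin n)).image fun i => Pi.single i (1 : ℚ)

/-- Positive roots of type `C_n`. -/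
def rootsC (n : ℕ) : Finset (Fin n → ℚ) :=
  rootsD n ∪ (Finset.univ : Finset (Fin n)).image fun i => Pi.single i (2 : ℚ)

/-- Positive roots of type `A_{n-1}` : `e_i - e_j` for `j < i`. -/
def rootsA (n : ℕ) : Finset (Fin n → ℚ) :=
  ((Finset.univ : Finset (Fin n × Fin n)).filter fun p => p.2 < p.1).image
      fun p => Pi.single p.1 (1 : ℚ) - Pi.single p.2 1

/-- `ρ` of type `B_n` : `e_i`-coordinate `i - 1/2` (`0`-based index `i ↦ i + 1/2`). -/
def rhoB (n : ℕ) : Fin n → ℚ := fun i => ((i : ℕ) : ℚ) + 1/2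

/-- `ρ` of type `C_n` : `e_i`-coordinate `i`. -/
def rhoC (n : ℕ) : Fin n → ℚ := fun i => ((i : ℕ) : ℚ) + 1

/-- `ρ` of type `D_n` : `e_i`-coordinate `i - 1`. -/
def rhoD (n : ℕ) : Fin n → ℚ := fun i => ((i : ℕ) : ℚ)

/-- `ρ` of type `A_{n-1}` : `e_i`-coordinate `i - 1`. -/
def rhoA (n : ℕ) : Fin n → ℚ := fun i => ((i : ℕ) : ℚ)

/-- The signed permutation `(σ, ε)` acting on a weight: it maps `e_j` to `± e_{σ j}`. -/
def wAct {n : ℕ} (σ : Equiv.Perm (Fin n)) (ε : Fin n → Bool) (β : Fin n → ℚ) :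
    Fin n → ℚ := fun i => (if ε i then -1 else 1) * β (σ⁻¹ i)

/-- The determinant (sign) of the signed permutation `(σ, ε)`. -/
def wDet {n : ℕ} (σ : Equiv.Perm (Fin n)) (ε : Fin n → Bool) : ℤ :=
  (Equiv.Perm.sign σ : ℤ) * ∏ i, (if ε i then (-1 : ℤ) else 1)

/-- Kostka-Foulkes polynomial of type `B_n`, as a power series in `q`. -/
def KB (n : ℕ) (lam mu : Fin n → ℚ) : PowerSeries ℤ :=
  ∑ σ : Equiv.Perm (Fin n), ∑ ε : Fin n → Bool,
    wDet σ ε • kostantQ (rootsB n) (wAct σ ε (lam + rhoB n) - (mu + rhoB n))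

/-- Kostka-Foulkes polynomial of type `C_n`, as a power series in `q`. -/
def KC (n : ℕ) (lam mu : Fin n → ℚ) : PowerSeries ℤ :=
  ∑ σ : Equiv.Perm (Fin n), ∑ ε : Fin n → Bool,
    wDet σ ε • kostantQ (rootsC n) (wAct σ ε (lam + rhoC n) - (mu + rhoC n))

/-- Kostka-Foulkes polynomial of type `D_n`, as a power series in `q` (the Weyl group
consists of the signed permutations with an even number of sign changes). -/
def KD (n : ℕ) (lam mu : Fin n → ℚ) : PowerSeries ℤ :=
  ∑ σ : Equiv.Perm (Fin n), ∑ ε : Fin n → Bool,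
    if (∏ i, (if ε i then (-1 : ℤ) else 1)) = 1 then
      wDet σ ε • kostantQ (rootsD n) (wAct σ ε (lam + rhoD n) - (mu + rhoD n))
    else 0

/-- Kostka-Foulkes polynomial of type `A_{n-1}`, as a power series in `q`. -/
def KA (n : ℕ) (lam mu : Fin n → ℚ) : PowerSeries ℤ :=
  ∑ σ : Equiv.Perm (Fin n),
    (Equiv.Perm.sign σ : ℤ) •
      kostantQ (rootsA n) ((fun i => (lam + rhoA n) (σ⁻¹ i)) - (mu + rhoA n))

/-- Dominant weight of type `B_n` : `λ_n ≥ ⋯ ≥ λ_1 ≥ 0`, all coordinates in `ℤ`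
or all in `ℤ + 1/2`. -/
def DominantB {n : ℕ} (lam : Fin n → ℚ) : Prop :=
  Monotone lam ∧ (∀ i, 0 ≤ lam i) ∧
    ((∀ i, ∃ z : ℤ, lam i = z) ∨ (∀ i, ∃ z : ℤ, lam i = z + 1/2))

/-- Dominant weight of type `C_n` : `λ_n ≥ ⋯ ≥ λ_1 ≥ 0`, integer coordinates. -/
def DominantC {n : ℕ} (lam : Fin n → ℚ) : Prop :=
  Monotone lam ∧ (∀ i, 0 ≤ lam i) ∧ ∀ i, ∃ z : ℤ, lam i = z

/-- Dominant weight of type `D_n` : `λ_n ≥ ⋯ ≥ λ_2 ≥ |λ_1|`, all coordinates in `ℤ`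
or all in `ℤ + 1/2`. -/
def DominantD {n : ℕ} (lam : Fin n → ℚ) : Prop :=
  (∀ i j : Fin n, i ≤ j → 0 < (i : ℕ) → lam i ≤ lam j) ∧
  (∀ h : 0 < n, ∀ j : Fin n, 0 < (j : ℕ) → |lam ⟨0, h⟩| ≤ lam j) ∧
  ((∀ i, ∃ z : ℤ, lam i = z) ∨ (∀ i, ∃ z : ℤ, lam i = z + 1/2))

/-- Restriction of a weight of rank `n` to the first `n - 1` coordinates
(i.e. forgetting the `e_n`-coordinate). -/
def restrict1 {n : ℕ} (lam : Fin n → ℚ) : Fin (n - 1) → ℚ :=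
  fun i => lam ⟨(i : ℕ), by have := i.2; omega⟩

/-- Pieri number `b^λ_{γ,r}` of type `B_n`. -/
def bPieri {m : ℕ} (γ lam : Fin m → ℚ) (r : ℕ) : ℕ :=
  Nat.card {t : (Fin m → ℕ) × (Fin m → ℕ) × Bool //
    ((cond t.2.2 1 0) + ∑ i, (t.1 i + t.2.1 i)) = r ∧
    (∀ i, ((t.2.1 i : ℚ) - (t.1 i : ℚ)) = lam i - γ i) ∧
    (∀ i : Fin m, ∀ h : (i : ℕ) + 1 < m,
      lam i ≤ lam ⟨(i : ℕ) + 1, h⟩ - (t.2.1 ⟨(i : ℕ) + 1, h⟩ : ℚ)) ∧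
    (∀ i : Fin m, ∀ h : (i : ℕ) + 1 < m,
      lam i + (t.1 i : ℚ) - (t.2.1 i : ℚ) ≤
        lam ⟨(i : ℕ) + 1, h⟩ - (t.2.1 ⟨(i : ℕ) + 1, h⟩ : ℚ)) ∧
    (∀ h : 0 < m,
      if t.2.2 then (0 : ℚ) < lam ⟨0, h⟩ - (t.2.1 ⟨0, h⟩ : ℚ)
      else (0 : ℚ) ≤ lam ⟨0, h⟩ - (t.2.1 ⟨0, h⟩ : ℚ))}

/-- Pieri number `c^λ_{γ,r}` of type `C_n`. -/
def cPieri {m : ℕ} (γ lam : Fin m → ℚ) (r : ℕ) : ℕ :=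
  Nat.card {t : (Fin m → ℕ) × (Fin m → ℕ) //
    (∑ i, (t.1 i + t.2 i)) = r ∧
    (∀ i, ((t.2 i : ℚ) - (t.1 i : ℚ)) = lam i - γ i) ∧
    (∀ i : Fin m, ∀ h : (i : ℕ) + 1 < m,
      lam i ≤ lam ⟨(i : ℕ) + 1, h⟩ - (t.2 ⟨(i : ℕ) + 1, h⟩ : ℚ)) ∧
    (∀ i : Fin m, ∀ h : (i : ℕ) + 1 < m,
      lam i + (t.1 i : ℚ) - (t.2 i : ℚ) ≤
        lam ⟨(i : ℕ) + 1, h⟩ - (t.2 ⟨(i : ℕ) + 1, h⟩ : ℚ)) ∧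
    (∀ h : 0 < m, (0 : ℚ) ≤ lam ⟨0, h⟩ - (t.2 ⟨0, h⟩ : ℚ))}

/-- Pieri number `d^λ_{γ,r}` of type `D_n`. -/
def dPieri {m : ℕ} (γ lam : Fin m → ℚ) (r : ℕ) : ℕ :=
  Nat.card {t : (Fin m → ℕ) × (Fin m → ℕ) //
    (∀ h : 0 < m, min (t.1 ⟨0, h⟩) (t.2 ⟨0, h⟩) = 0) ∧
    (∑ i, (t.1 i + t.2 i)) = r ∧
    (∀ i, ((t.2 i : ℚ) - (t.1 i : ℚ)) = lam i - γ i) ∧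
    (∀ h : 1 < m,
      (t.1 ⟨0, by omega⟩ = 0 →
        lam ⟨0, by omega⟩ ≤ lam ⟨1, h⟩ - (t.2 ⟨1, h⟩ : ℚ)) ∧
      (0 < t.1 ⟨0, by omega⟩ →
        -lam ⟨0, by omega⟩ ≤ lam ⟨1, h⟩ - (t.2 ⟨1, h⟩ : ℚ))) ∧
    (∀ i : Fin m, 1 ≤ (i : ℕ) → ∀ h : (i : ℕ) + 1 < m,
      lam i ≤ lam ⟨(i : ℕ) + 1, h⟩ - (t.2 ⟨(i : ℕ) + 1, h⟩ : ℚ)) ∧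
    (∀ i : Fin m, 1 ≤ (i : ℕ) → ∀ h : (i : ℕ) + 1 < m,
      lam i + (t.1 i : ℚ) - (t.2 i : ℚ) ≤
        lam ⟨(i : ℕ) + 1, h⟩ - (t.2 ⟨(i : ℕ) + 1, h⟩ : ℚ)) ∧
    (∀ h : 1 < m,
      (t.1 ⟨0, by omega⟩ = 0 → 0 ≤ γ ⟨0, by omega⟩ →
        lam ⟨0, by omega⟩ - (t.2 ⟨0, by omega⟩ : ℚ) ≤ lam ⟨1, h⟩ - (t.2 ⟨1, h⟩ : ℚ)) ∧
      (t.2 ⟨0, by omega⟩ = 0 → 0 ≤ γ ⟨0, by omega⟩ →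
        lam ⟨0, by omega⟩ + (t.1 ⟨0, by omega⟩ : ℚ) ≤ lam ⟨1, h⟩ - (t.2 ⟨1, h⟩ : ℚ)) ∧
      (t.2 ⟨0, by omega⟩ = 0 → γ ⟨0, by omega⟩ < 0 →
        -lam ⟨0, by omega⟩ - (t.1 ⟨0, by omega⟩ : ℚ) ≤ lam ⟨1, h⟩ - (t.2 ⟨1, h⟩ : ℚ)) ∧
      (t.1 ⟨0, by omega⟩ = 0 → γ ⟨0, by omega⟩ < 0 →
        -lam ⟨0, by omega⟩ + (t.2 ⟨0, by omega⟩ : ℚ) ≤ lam ⟨1, h⟩ - (t.2 ⟨1, h⟩ : ℚ)))}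

/-- The monomial `x^β = ∏ y_i ^ (2 β_i)` in the Laurent polynomial ring
`ℤ[y_1^{±1}, …, y_n^{±1}]`, realized as the group algebra of `ℤ^n`. -/
def xpow {n : ℕ} (β : Fin n → ℚ) : AddMonoidAlgebra ℤ (Fin n → ℤ) :=
  AddMonoidAlgebra.single (fun i => ⌊2 * β i⌋) 1

/-- The Weyl alternant `a_β = ∑_{σ ∈ W_{B_n}} det σ · x^{σ β}` of type `B_n`. -/
def altB {n : ℕ} (β : Fin n → ℚ) : AddMonoidAlgebra ℤ (Fin n → ℤ) :=
  ∑ σ : Equiv.Perm (Fin n), ∑ ε : Fin n → Bool, wDet σ ε • xpow (wAct σ ε β)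

/-- The Weyl alternant `a_β = ∑_{σ ∈ W_{D_n}} det σ · x^{σ β}` of type `D_n`. -/
def altD {n : ℕ} (β : Fin n → ℚ) : AddMonoidAlgebra ℤ (Fin n → ℤ) :=
  ∑ σ : Equiv.Perm (Fin n), ∑ ε : Fin n → Bool,
    if (∏ i, (if ε i then (-1 : ℤ) else 1)) = 1 then wDet σ ε • xpow (wAct σ ε β) else 0

end

/-!
Expand the Weyl sum defining `K^{C_n}` along the coordinate `x_j` of `x = ν + ρ` that is moved,
with either sign, to the last place. The negative sign contributes nothing, because every positive
root has a nonnegative last coordinate. For the positive sign, a decomposition into positive roots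
uses `a_i` times `e_n + e_i`, `b_i` times `e_n - e_i` and `m` times `2 e_n`, where
`r = ∑ (a_i + b_i)` satisfies `r + 2 m = R`; what is left is a decomposition of rank `n - 1`,
shifted by `b - a`. The multiset of these shifts for a given `r` is invariant under the Weyl
group, so they may be applied to the dominant weight `x` before alternating.

It remains to evaluate `∑ F(x + b - a)` for an alternating function `F`. Split each displacement
into `a_i` steps down, to `y = x - a`, followed by `b_i` steps up, to `z = y + b`. Reflecting at the
first `y_i ≤ 0` cancels the pairs with some `y_i ≤ 0`; then, for fixed `y`, transposing coordinates
of `z`, and, for fixed `x`, transposing those of `y` cancels all pairs except those for which `y`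
interlaces both `x` and `z`. These are exactly the tuples counted by the Pieri numbers.
-/

open Finset

section Cancellation

variable {α A κ : Type*} [AddCommGroup A] [IsAddTorsionFree A]

theorem sum_eq_sum_filter_of_isLeast_involution [LinearOrder κ] [WellFoundedLT κ]
    {s : Finset α} {f : α → A} {P : κ → α → Prop} {T : κ → α → α}
    [DecidablePred fun a => ∀ k, ¬ P k a]
    (hT : ∀ a ∈ s, ∀ k, IsLeast {l | P l a} k →
      T k a ∈ s ∧ IsLeast {l | P l (T k a)} k ∧ T k (T k a) = a ∧ f (T k a) = -f a) :
    ∑ a ∈ s, f a = ∑ a ∈ s with ∀ k, ¬ P k a, f a := by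
  have exists_isLeast : ∀ a ∈ s.filter fun a => ¬ ∀ k, ¬ P k a, ∃ k, IsLeast {l | P l a} k := by
    intro a ha
    have hne : {l | P l a}.Nonempty := not_forall_not.1 (mem_filter.1 ha).2
    exact ⟨wellFounded_lt.min _ hne, wellFounded_lt.min_mem _ hne,
      fun l hl => wellFounded_lt.min_le hl⟩
  choose k hk using exists_isLeast
  have key := fun a ha => hT a (mem_filter.1 ha).1 _ (hk a ha)
  have T_mem : ∀ a ha, T (k a ha) a ∈ s.filter fun a => ¬ ∀ k, ¬ P k a := fun a ha =>
    mem_filter.2 ⟨(key a ha).1, fun h => h _ (key a ha).2.1.1⟩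
  rw [← sum_filter_add_sum_filter_not s fun a => ∀ k, ¬ P k a, add_eq_left]
  refine sum_involution (fun a ha => T (k a ha) a) (fun a ha => ?_) (fun a ha hfa hTa => hfa ?_)
    T_mem (fun a ha => ?_)
  · rw [(key a ha).2.2.2, add_neg_cancel]
  · exact self_eq_neg.1 (by simpa only [hTa] using (key a ha).2.2.2)
  · have hkT : k _ (T_mem a ha) = k a ha := (hk _ (T_mem a ha)).unique (key a ha).2.1
    simpa only [hkT] using (key a ha).2.2.1

variable {ι β : Type*} [LinearOrder ι] [Finite ι] [LinearOrder β]

theorem sum_eq_sum_filter_forall_lt_of_comp_swap {x : ι → β} (hx : StrictMono x)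
    {s : Finset (ι → β)} {f : (ι → β) → A}
    [DecidablePred fun z : ι → β => ∀ i j, i < j → z i < x j] (hle : ∀ z ∈ s, x ≤ z)
    (hs : ∀ z ∈ s, ∀ i j, x ≤ z ∘ Equiv.swap i j → z ∘ Equiv.swap i j ∈ s)
    (hf : ∀ z i j, i ≠ j → f (z ∘ Equiv.swap i j) = -f z) :
    ∑ z ∈ s, f z = ∑ z ∈ s with ∀ i j, i < j → z i < x j, f z := by
  classical
  -- With the violating pairs ordered lexicographically, no index lies strictly between the two
  -- entries of the first one, so the swap creates no earlier violation.
  let P : ι ×ₗ ι → (ι → β) → Prop := fun k z =>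
    (ofLex k).1 < (ofLex k).2 ∧ x (ofLex k).2 ≤ z (ofLex k).1
  have hP : ∀ z : ι → β, (∀ k, ¬ P k z) ↔ ∀ i j, i < j → z i < x j := fun z =>
    ⟨fun h i j hij => not_le.1 fun hz => h (toLex (i, j)) ⟨hij, hz⟩,
      fun h k hk => (h _ _ hk.1).not_ge hk.2⟩
  have main := sum_eq_sum_filter_of_isLeast_involution (s := s) (f := f) (P := P)
    (T := fun k z => z ∘ Equiv.swap (ofLex k).1 (ofLex k).2) ?_
  · simpa only [hP] using main
  intro z hz k ⟨⟨hij, hxz⟩, hmin⟩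
  obtain ⟨⟨i, j⟩, rfl⟩ := toLex.surjective k
  simp only [ofLex_toLex] at hij hxz ⊢
  have no_between : ∀ b, i < b → ¬ b < j := fun b hib hbj =>
    (hmin (show P (toLex (i, b)) z from ⟨hib, (hx hbj).le.trans hxz⟩)).not_gt
      (Prod.Lex.toLex_lt_toLex.2 (Or.inr ⟨rfl, hbj⟩))
  have x_le_swap : x ≤ z ∘ Equiv.swap i j := by
    intro l
    rcases eq_or_ne l i with rfl | hli
    · simpa using (hx hij).le.trans (hle z hz j)
    rcases eq_or_ne l j with rfl | hlj
    · simpa using hxz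
    · simpa [Equiv.swap_apply_of_ne_of_ne hli hlj] using hle z hz l
  refine ⟨hs z hz i j x_le_swap, ⟨⟨hij, by simpa using hle z hz j⟩, ?_⟩, ?_, hf z i j hij.ne⟩
  · intro l ⟨hab, hxz'⟩
    obtain ⟨⟨a, b⟩, rfl⟩ := toLex.surjective l
    simp only [ofLex_toLex] at hab hxz'
    rw [Prod.Lex.toLex_le_toLex]
    rcases lt_trichotomy i a with hia | rfl | hai
    · exact Or.inl hia
    · exact Or.inr ⟨rfl, not_lt.1 (no_between b hab)⟩
    · rw [Function.comp_apply, Equiv.swap_apply_of_ne_of_ne hai.ne (hai.trans hij).ne] at hxz'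
      exact Prod.Lex.toLex_le_toLex.1 (hmin (show P (toLex (a, b)) z from ⟨hab, hxz'⟩))
  · ext l
    simp only [Function.comp_apply, Equiv.swap_apply_self]

theorem sum_eq_sum_filter_forall_gt_of_comp_swap {x : ι → β} (hx : StrictMono x)
    {s : Finset (ι → β)} {f : (ι → β) → A}
    [DecidablePred fun y : ι → β => ∀ i j, i < j → x i < y j] (hle : ∀ y ∈ s, y ≤ x)
    (hs : ∀ y ∈ s, ∀ i j, y ∘ Equiv.swap i j ≤ x → y ∘ Equiv.swap i j ∈ s)
    (hf : ∀ y i j, i ≠ j → f (y ∘ Equiv.swap i j) = -f y) :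
    ∑ y ∈ s, f y = ∑ y ∈ s with ∀ i j, i < j → x i < y j, f y := by
  classical
  let x' : ιᵒᵈ → βᵒᵈ := fun i => OrderDual.toDual (x (OrderDual.ofDual i))
  let s' : Finset (ιᵒᵈ → βᵒᵈ) := s
  let f' : (ιᵒᵈ → βᵒᵈ) → A := f
  have hx' : StrictMono x' := fun _ _ h => hx h
  have hle' : ∀ y ∈ s', x' ≤ y := hle
  have main : ∑ y ∈ s', f' y = ∑ y ∈ s' with ∀ i j, i < j → y i < x' j, f' y :=
    sum_eq_sum_filter_forall_lt_of_comp_swap hx' hle' (fun y hy i j => hs y hy i j)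
      fun y i j => hf y i j
  exact main.trans (sum_congr (ext fun y => mem_filter.trans ((and_congr_right fun _ =>
    ⟨fun h i j hij => h j i hij, fun h i j hij => h j i hij⟩).trans
      (@mem_filter (ι → β) _ _ _ _).symm)) fun _ _ => rfl)

end Cancellation

section Interlacing

variable {ι β : Type*}

/-- `y` lies weakly below `x` and each coordinate of `y` lies strictly above all earlier ones
of `x`; for two integer sequences shifted by `ρ` this is interlacing of the unshifted ones. -/
def Interlaces [LT ι] [Preorder β] (y x : ι → β) : Prop :=
  y ≤ x ∧ ∀ i j, i < j → x i < y j

theorem Interlaces.strictMono_left [Preorder ι] [Preorder β] {y x : ι → β}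
    (h : Interlaces y x) : StrictMono y :=
  fun i j hij => (h.1 i).trans_lt (h.2 i j hij)

theorem Interlaces.strictMono_right [Preorder ι] [Preorder β] {y x : ι → β}
    (h : Interlaces y x) : StrictMono x :=
  fun i j hij => (h.2 i j hij).trans_le (h.1 j)

theorem interlaces_iff_forall_covBy [PartialOrder ι] [LocallyFiniteOrder ι] [Preorder β]
    {y x : ι → β} : Interlaces y x ↔ y ≤ x ∧ ∀ i j, i ⋖ j → x i < y j := by
  refine and_congr_right fun hyx => ⟨fun h i j hij => h i j hij.lt, fun h i j hij => ?_⟩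
  have hy : StrictMono y :=
    (strictMono_iff_forall_covBy y).2 fun a b hab => (hyx a).trans_lt (h a b hab)
  obtain ⟨k, hik, hkj⟩ := exists_covBy_le_of_lt hij
  exact (h i k hik).trans_le (hy.monotone hkj)

theorem forall_fin_covBy_iff {m : ℕ} {P : Fin m → Fin m → Prop} :
    (∀ i j, i ⋖ j → P i j) ↔ ∀ (i : Fin m) (h : (i : ℕ) + 1 < m), P i ⟨i + 1, h⟩ := by
  simp only [Fin.covBy_iff, Nat.covBy_iff_add_one_eq]
  refine ⟨fun H i h => H i _ rfl, fun H i ⟨j, hj⟩ hij => ?_⟩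
  subst hij
  exact H i hj

end Interlacing

section Pieri

variable {ι : Type*} [Fintype ι] [DecidableEq ι]

/-- The displacement of a weight by a family of steps: `ab (i, false)` steps along `e_i` and
`ab (i, true)` steps along `-e_i`. -/
def netShift {R : Type*} [Ring R] (ab : ι × Bool → ℕ) : ι → R :=
  fun i => ab (i, false) - ab (i, true)

/-- The pairs `(y, z)` such that `y` is obtained from `x` by `r'` downward unit steps, and `z`
from `y` by `r - r'` upward ones. -/
def pieriPairs (x : ι → ℤ) (r : ℕ) : Finset ((ι → ℤ) × (ι → ℤ)) :=
  (piAntidiag (univ : Finset (ι × Bool)) r).image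
    fun ab => (fun i => x i - ab (i, true), x + netShift ab)

theorem mem_pieriPairs {x : ι → ℤ} {r : ℕ} {p : (ι → ℤ) × (ι → ℤ)} :
    p ∈ pieriPairs x r ↔ p.1 ≤ x ∧ p.1 ≤ p.2 ∧ ∑ i, (x i + p.2 i - 2 * p.1 i) = r := by
  simp only [pieriPairs, mem_image, mem_piAntidiag, mem_univ, implies_true, and_true]
  constructor
  · rintro ⟨ab, hab, rfl⟩
    refine ⟨fun i => by simp, fun i => by simp only [netShift, Pi.add_apply]; omega, ?_⟩
    rw [← hab, Fintype.sum_prod_type]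
    push_cast
    refine sum_congr rfl fun i _ => ?_
    simp only [netShift, Pi.add_apply, Fintype.sum_bool]
    ring
  · rintro ⟨hyx, hyz, hsum⟩
    have down_eq := fun i => Int.toNat_of_nonneg (sub_nonneg.2 (hyx i))
    have up_eq := fun i => Int.toNat_of_nonneg (sub_nonneg.2 (hyz i))
    refine ⟨fun t => bif t.2 then (x t.1 - p.1 t.1).toNat else (p.2 t.1 - p.1 t.1).toNat, ?_, ?_⟩
    · zify
      rw [← hsum, Fintype.sum_prod_type]
      refine sum_congr rfl fun i _ => ?_
      simp only [Fintype.sum_bool, cond_true, cond_false, down_eq, up_eq]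
      ring
    · refine Prod.ext (funext fun i => ?_) (funext fun i => ?_) <;> simp [netShift, down_eq, up_eq]

theorem sum_add_netShift_eq_sum_pieriPairs {A : Type*} [AddCommMonoid A] (F : (ι → ℤ) → A)
    (x : ι → ℤ) (r : ℕ) :
    ∑ ab ∈ piAntidiag (univ : Finset (ι × Bool)) r, F (x + netShift ab) =
      ∑ p ∈ pieriPairs x r, F p.2 := by
  rw [pieriPairs, sum_image fun ab _ ab' _ h => ?_]
  rw [Prod.ext_iff] at h
  simp only [funext_iff, netShift, Pi.add_apply] at h
  funext ⟨i, s⟩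
  have down_eq := h.1 i
  have net_eq := h.2 i
  cases s <;> omega

end Pieri

section PieriCancellation

variable {ι A : Type*} [Fintype ι] [LinearOrder ι] [AddCommGroup A] [IsAddTorsionFree A]
  {F : (ι → ℤ) → A} {x : ι → ℤ}

open Classical in
theorem sum_pieriPairs_eq_sum_pos (hneg : ∀ z i, F (Function.update z i (-z i)) = -F z)
    (hx : ∀ i, 0 < x i) (r : ℕ) :
    ∑ p ∈ pieriPairs x r, F p.2 = ∑ p ∈ pieriPairs x r with ∀ i, ¬ p.1 i ≤ 0, F p.2 := by
  let T : ι → (ι → ℤ) × (ι → ℤ) → (ι → ℤ) × (ι → ℤ) := fun i p =>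
    (Function.update p.1 i (p.1 i - p.2 i), Function.update p.2 i (-p.2 i))
  refine sum_eq_sum_filter_of_isLeast_involution (f := fun p => F p.2)
    (P := fun i p => p.1 i ≤ 0) (T := T) fun p hp i hi => ?_
  obtain ⟨hyx, hyz, hsum⟩ := mem_pieriPairs.1 hp
  have hyi : p.1 i ≤ 0 := hi.1
  have T_le_zero_iff : ∀ l, (T i p).1 l ≤ 0 ↔ p.1 l ≤ 0 := by
    intro l
    rcases eq_or_ne l i with rfl | hl
    · simpa [T, hyi] using hyz l
    · simp [T, hl]
  refine ⟨mem_pieriPairs.2 ⟨fun l => ?_, fun l => ?_, ?_⟩, by simpa only [T_le_zero_iff] using hi,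
    by simp [T], hneg p.2 i⟩
  · rcases eq_or_ne l i with rfl | hl
    · exact ((T_le_zero_iff l).2 hyi).trans (hx l).le
    · simpa [T, hl] using hyx l
  · rcases eq_or_ne l i with rfl | hl
    · simpa [T] using hyi
    · simpa [T, hl] using hyz l
  · rw [← hsum]
    refine sum_congr rfl fun l _ => ?_
    rcases eq_or_ne l i with rfl | hl
    · simp only [T, Function.update_self]; ring
    · simp only [T, Function.update_of_ne hl]

/-- The points of `ℤ^ι` reached from `y` by `d` upward unit steps. -/
noncomputable def upperSlice (y : ι → ℤ) (d : ℤ) : Finset (ι → ℤ) :=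
  {z ∈ Icc y (fun i => y i + d) | ∑ i, (z i - y i) = d}

theorem mem_upperSlice {y z : ι → ℤ} {d : ℤ} :
    z ∈ upperSlice y d ↔ y ≤ z ∧ ∑ i, (z i - y i) = d := by
  rw [upperSlice, mem_filter, mem_Icc, and_assoc, and_congr_right_iff, and_iff_right_iff_imp]
  rintro hyz rfl i
  have := single_le_sum (f := fun i => z i - y i) (fun j _ => sub_nonneg.2 (hyz j)) (mem_univ i)
  linarith

theorem comp_swap_mem_upperSlice_comp_swap {y z : ι → ℤ} {d : ℤ} (i j : ι) :
    z ∘ Equiv.swap i j ∈ upperSlice (y ∘ Equiv.swap i j) d ↔ z ∈ upperSlice y d := by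
  simp only [mem_upperSlice, Pi.le_def, Function.comp_apply]
  rw [(Equiv.swap i j).forall_congr_right (q := fun i => y i ≤ z i),
    Equiv.sum_comp (Equiv.swap i j) fun i => z i - y i]

open Classical in
theorem sum_upperSlice_eq_sum_interlaces (hswap : ∀ z i j, i ≠ j → F (z ∘ Equiv.swap i j) = -F z)
    {y : ι → ℤ} (hy : StrictMono y) (d : ℤ) :
    ∑ z ∈ upperSlice y d, F z = ∑ z ∈ upperSlice y d with Interlaces y z, F z := by
  rw [sum_eq_sum_filter_forall_lt_of_comp_swap hy (fun z hz => (mem_upperSlice.1 hz).1)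
    (fun z hz i j hyz => ?_) hswap]
  · exact sum_congr (filter_congr fun z hz => (and_iff_right (mem_upperSlice.1 hz).1).symm)
      fun _ _ => rfl
  · rw [mem_upperSlice] at hz ⊢
    refine ⟨hyz, ?_⟩
    simp only [sum_sub_distrib, Function.comp_apply] at hz ⊢
    rw [Equiv.sum_comp, hz.2]

open Classical in
theorem sum_sum_upperSlice_eq_sum_interlaces
    (hswap : ∀ z i j, i ≠ j → F (z ∘ Equiv.swap i j) = -F z) (hx : StrictMono x) (d : ℤ) :
    ∑ y ∈ Icc 1 x, ∑ z ∈ upperSlice y (d - ∑ i, (x i - y i)), F z =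
      ∑ y ∈ Icc 1 x with Interlaces y x,
        ∑ z ∈ upperSlice y (d - ∑ i, (x i - y i)), F z := by
  rw [sum_eq_sum_filter_forall_gt_of_comp_swap hx (fun y hy => (mem_Icc.1 hy).2)
    (fun y hy i j hyx => mem_Icc.2 ⟨fun l => (mem_Icc.1 hy).1 _, hyx⟩) fun y i j hij => ?_]
  · exact sum_congr (filter_congr fun y hy => (and_iff_right (mem_Icc.1 hy).2).symm)
      fun _ _ => rfl
  · simp only [sum_sub_distrib, Function.comp_apply]
    rw [Equiv.sum_comp, ← sum_neg_distrib]
    refine (sum_equiv ((Equiv.swap i j).arrowCongr (Equiv.refl ℤ)) (fun z => ?_)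
      fun z _ => ?_).symm
    · exact (comp_swap_mem_upperSlice_comp_swap i j).symm
    · exact (hswap z i j hij).symm

open Classical in
/-- The pairs counted by the Pieri numbers: `(y, z) ∈ pieriPairs x r` with `y` positive and
interlacing both `x` and `z`. -/
noncomputable def interlacingPairs (x : ι → ℤ) (r : ℕ) : Finset ((ι → ℤ) × (ι → ℤ)) :=
  {p ∈ pieriPairs x r | 1 ≤ p.1 ∧ Interlaces p.1 x ∧ Interlaces p.1 p.2}

open Classical in
theorem mem_interlacingPairs {r : ℕ} {p : (ι → ℤ) × (ι → ℤ)} :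
    p ∈ interlacingPairs x r ↔
      p ∈ pieriPairs x r ∧ 1 ≤ p.1 ∧ Interlaces p.1 x ∧ Interlaces p.1 p.2 :=
  mem_filter

theorem sum_pieriPairs_eq_sum_interlacingPairs
    (hneg : ∀ z i, F (Function.update z i (-z i)) = -F z)
    (hswap : ∀ z i j, i ≠ j → F (z ∘ Equiv.swap i j) = -F z)
    (hx : StrictMono x) (hx0 : ∀ i, 0 < x i) (r : ℕ) :
    ∑ p ∈ pieriPairs x r, F p.2 = ∑ p ∈ interlacingPairs x r, F p.2 := by
  classical
  have mem_iff : ∀ y z : ι → ℤ, (y, z) ∈ pieriPairs x r ↔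
      y ≤ x ∧ z ∈ upperSlice y (r - ∑ i, (x i - y i)) := by
    intro y z
    have : ∑ i, (x i + z i - 2 * y i) = ∑ i, (x i - y i) + ∑ i, (z i - y i) := by
      rw [← sum_add_distrib]
      exact sum_congr rfl fun i _ => by ring
    rw [mem_pieriPairs, mem_upperSlice, this, eq_sub_iff_add_eq']
  calc ∑ p ∈ pieriPairs x r, F p.2
    _ = ∑ p ∈ pieriPairs x r with ∀ i, ¬ p.1 i ≤ 0, F p.2 := sum_pieriPairs_eq_sum_pos hneg hx0 r
    _ = ∑ y ∈ Icc 1 x, ∑ z ∈ upperSlice y (r - ∑ i, (x i - y i)), F z := by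
      refine sum_finset_product (f := fun p => F p.2) _ _ _ fun p => ?_
      simp only [mem_filter, mem_iff, mem_Icc, not_le, Pi.le_def, Pi.one_apply,
        Order.one_le_iff_pos]
      tauto
    _ = ∑ y ∈ Icc 1 x with Interlaces y x,
          ∑ z ∈ upperSlice y (r - ∑ i, (x i - y i)) with Interlaces y z, F z := by
      rw [sum_sum_upperSlice_eq_sum_interlaces hswap hx]
      exact sum_congr rfl fun y hy =>
        sum_upperSlice_eq_sum_interlaces hswap (mem_filter.1 hy).2.strictMono_left _
    _ = ∑ p ∈ interlacingPairs x r, F p.2 := by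
      refine (sum_finset_product (f := fun p => F p.2) _ _ _ fun p => ?_).symm
      simp only [mem_interlacingPairs, mem_filter, mem_iff, mem_Icc]
      tauto

end PieriCancellation

section PieriNumbers

variable {m : ℕ}

theorem mem_interlacingPairs_fin {x : Fin m → ℤ} {r : ℕ} {p : (Fin m → ℤ) × (Fin m → ℤ)} :
    p ∈ interlacingPairs x r ↔ p.1 ≤ x ∧ p.1 ≤ p.2 ∧ ∑ i, (x i + p.2 i - 2 * p.1 i) = r ∧
      (∀ (i : Fin m) (h : (i : ℕ) + 1 < m), p.2 i < p.1 ⟨i + 1, h⟩) ∧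
      (∀ (i : Fin m) (h : (i : ℕ) + 1 < m), x i < p.1 ⟨i + 1, h⟩) ∧
      ∀ h : 0 < m, 1 ≤ p.1 ⟨0, h⟩ := by
  have interlaces_iff : ∀ w : Fin m → ℤ, Interlaces p.1 w ↔ p.1 ≤ w ∧
      ∀ (i : Fin m) (h : (i : ℕ) + 1 < m), w i < p.1 ⟨i + 1, h⟩ := fun w => by
    rw [interlaces_iff_forall_covBy, forall_fin_covBy_iff (P := fun i j => w i < p.1 j)]
  have one_le_iff : Interlaces p.1 x → (1 ≤ p.1 ↔ ∀ h : 0 < m, 1 ≤ p.1 ⟨0, h⟩) := fun hyx =>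
    ⟨fun h _ => h _, fun h i => (h i.pos).trans (hyx.strictMono_left.monotone (Nat.zero_le i))⟩
  rw [mem_interlacingPairs, mem_pieriPairs]
  constructor
  · rintro ⟨⟨hyx, hyz, hsum⟩, hpos, hx, hz⟩
    exact ⟨hyx, hyz, hsum, ((interlaces_iff _).1 hz).2, ((interlaces_iff _).1 hx).2,
      (one_le_iff hx).1 hpos⟩
  · rintro ⟨hyx, hyz, hsum, hz, hx, hpos⟩
    have hx' := (interlaces_iff x).2 ⟨hyx, hx⟩
    exact ⟨⟨hyx, hyz, hsum⟩, (one_le_iff hx').2 hpos, hx', (interlaces_iff _).2 ⟨hyz, hz⟩⟩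

/-- The inequalities on a tuple `(k, k')` that the Pieri number `cPieri γ lam r` counts. -/
def IsPieriTuple (γ lam : Fin m → ℚ) (r : ℕ) (t : (Fin m → ℕ) × (Fin m → ℕ)) : Prop :=
  (∑ i, (t.1 i + t.2 i)) = r ∧ (∀ i, (t.2 i : ℚ) - t.1 i = lam i - γ i) ∧
    (∀ i : Fin m, ∀ h : (i : ℕ) + 1 < m, lam i ≤ lam ⟨i + 1, h⟩ - t.2 ⟨i + 1, h⟩) ∧
    (∀ i : Fin m, ∀ h : (i : ℕ) + 1 < m,
      lam i + t.1 i - t.2 i ≤ lam ⟨i + 1, h⟩ - t.2 ⟨i + 1, h⟩) ∧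
    ∀ h : 0 < m, 0 ≤ lam ⟨0, h⟩ - t.2 ⟨0, h⟩

theorem cPieri_eq_card_isPieriTuple (γ lam : Fin m → ℚ) (r : ℕ) :
    cPieri γ lam r = Nat.card {t // IsPieriTuple γ lam r t} :=
  rfl

theorem isPieriTuple_iff_mem_interlacingPairs {γ lam : Fin m → ℚ} {x y z : Fin m → ℤ}
    (hγ : γ + rhoC m = fun i => (x i : ℚ)) (hlam : lam + rhoC m = fun i => (z i : ℚ)) {r : ℕ}
    {k k' : Fin m → ℕ} (hk : ∀ i, (k i : ℤ) = x i - y i) (hk' : ∀ i, (k' i : ℤ) = z i - y i) :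
    IsPieriTuple γ lam r (k, k') ↔ (y, z) ∈ interlacingPairs x r := by
  have hγi : ∀ i, γ i = x i - ((i : ℕ) + 1) := fun i => eq_sub_of_add_eq (congrFun hγ i)
  have hlami : ∀ i, lam i = z i - ((i : ℕ) + 1) := fun i => eq_sub_of_add_eq (congrFun hlam i)
  have hkq : ∀ i, (k i : ℚ) = x i - y i := fun i => by exact_mod_cast hk i
  have hkq' : ∀ i, (k' i : ℚ) = z i - y i := fun i => by exact_mod_cast hk' i
  have hyx : y ≤ x := fun i => sub_nonneg.1 (hk i ▸ Int.natCast_nonneg _)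
  have hyz : y ≤ z := fun i => sub_nonneg.1 (hk' i ▸ Int.natCast_nonneg _)
  have hnet : ∀ i, (k' i : ℚ) - k i = lam i - γ i := fun i => by
    rw [hkq, hkq', hγi, hlami]; ring
  have hsum : ∑ i, (k i + k' i) = r ↔ ∑ i, (x i + z i - 2 * y i) = r := by
    zify
    simp only [hk, hk']
    exact Eq.congr_left (sum_congr rfl fun i _ => by ring)
  have hz_lt : ∀ (i : Fin m) (h : (i : ℕ) + 1 < m),
      lam i ≤ lam ⟨i + 1, h⟩ - k' ⟨i + 1, h⟩ ↔ z i < y ⟨i + 1, h⟩ := fun i h => by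
    rw [← Int.add_one_le_iff, ← Int.cast_le (R := ℚ), hlami, hlami, hkq']
    push_cast
    constructor <;> intro <;> linarith
  have hx_lt : ∀ (i : Fin m) (h : (i : ℕ) + 1 < m),
      lam i + k i - k' i ≤ lam ⟨i + 1, h⟩ - k' ⟨i + 1, h⟩ ↔ x i < y ⟨i + 1, h⟩ := fun i h => by
    rw [← Int.add_one_le_iff, ← Int.cast_le (R := ℚ), hlami, hlami, hkq, hkq', hkq']
    push_cast
    constructor <;> intro <;> linarith
  have hy_zero : ∀ h : 0 < m, 0 ≤ lam ⟨0, h⟩ - k' ⟨0, h⟩ ↔ 1 ≤ y ⟨0, h⟩ := fun h => by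
    rw [← Int.cast_le (R := ℚ), hlami, hkq']
    push_cast
    constructor <;> intro <;> linarith
  rw [mem_interlacingPairs_fin, IsPieriTuple]
  simp only [hsum, hz_lt, hx_lt, hy_zero, hnet, hyx, hyz, implies_true, true_and]

theorem cPieri_eq_card_interlacingPairs {γ lam : Fin m → ℚ} {x z : Fin m → ℤ}
    (hγ : γ + rhoC m = fun i => (x i : ℚ)) (hlam : lam + rhoC m = fun i => (z i : ℚ)) (r : ℕ) :
    cPieri γ lam r = #{p ∈ interlacingPairs x r | p.2 = z} := by
  have net_eq : ∀ k k' : Fin m → ℕ, (∀ i, (k' i : ℚ) - k i = lam i - γ i) →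
      ∀ i, (k' i : ℤ) = z i - (x i - k i) := fun k k' h i => by
    have hγi := congrFun hγ i
    have hlami := congrFun hlam i
    rw [Pi.add_apply] at hγi hlami
    have : (k' i : ℚ) = z i - (x i - k i) := by linarith [h i]
    exact_mod_cast this
  have mem_iff := fun y k k' => isPieriTuple_iff_mem_interlacingPairs (y := y) (k := k)
    (k' := k') (r := r) hγ hlam
  rw [cPieri_eq_card_isPieriTuple, ← Nat.card_eq_finsetCard]
  refine Nat.card_eq_of_bijective (fun t => ⟨(fun i => x i - t.1.1 i, z), mem_filter.2
    ⟨(mem_iff _ _ _ (fun i => (sub_sub_cancel _ _).symm) (net_eq _ _ t.2.2.1)).1 t.2, rfl⟩⟩)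
    ⟨fun t t' h => ?_, fun ⟨⟨y, z'⟩, hp⟩ => ?_⟩
  · have hk : ∀ i, t.1.1 i = t'.1.1 i := fun i => by
      have := congrFun (congrArg (fun p => p.1.1) h) i
      simpa using this
    have hk' : ∀ i, t.1.2 i = t'.1.2 i := fun i => by
      have net_t := net_eq _ _ t.2.2.1 i
      have net_t' := net_eq _ _ t'.2.2.1 i
      rw [hk i] at net_t
      omega
    exact Subtype.ext (Prod.ext (funext hk) (funext hk'))
  · obtain ⟨hyz, rfl⟩ : (y, z') ∈ interlacingPairs x r ∧ z' = z := mem_filter.1 hp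
    have hmem := mem_interlacingPairs_fin.1 hyz
    have hk : ∀ i, ((x i - y i).toNat : ℤ) = x i - y i := fun i =>
      Int.toNat_of_nonneg (sub_nonneg.2 (hmem.1 i))
    have hk' : ∀ i, ((z' i - y i).toNat : ℤ) = z' i - y i := fun i =>
      Int.toNat_of_nonneg (sub_nonneg.2 (hmem.2.1 i))
    refine ⟨⟨(fun i => (x i - y i).toNat, fun i => (z' i - y i).toNat),
      (mem_iff y _ _ hk hk').2 hyz⟩, Subtype.ext (Prod.ext (funext fun i => ?_) rfl)⟩
    simp only [hk, sub_sub_cancel]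

theorem dominantC_sub_rhoC {z : Fin m → ℤ} (hz : StrictMono z) (hz_pos : 1 ≤ z) :
    DominantC ((fun i => (z i : ℚ)) - rhoC m) := by
  have monotone : Monotone ((fun i => (z i : ℚ)) - rhoC m) := by
    refine (monotone_iff_forall_covBy _).2 fun i j hij => ?_
    have hval : (i : ℕ) + 1 = j := by
      rwa [Fin.covBy_iff, Nat.covBy_iff_add_one_eq] at hij
    have hlt : (z i : ℚ) + 1 ≤ z j := by exact_mod_cast hz hij.lt
    simp only [Pi.sub_apply, rhoC, ← hval]
    push_cast
    linarith
  refine ⟨monotone, fun i => le_trans ?_ (monotone (show ⟨0, i.pos⟩ ≤ i from Nat.zero_le _)),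
    fun i => ⟨z i - (i + 1), by simp [rhoC]⟩⟩
  have hpos : (1 : ℚ) ≤ z ⟨0, i.pos⟩ := by exact_mod_cast hz_pos _
  simpa [rhoC] using hpos

theorem finsum_mem_dominantC_cPieri_smul {A : Type*} [AddCommGroup A] (G : (Fin m → ℚ) → A)
    {γ : Fin m → ℚ} {x : Fin m → ℤ} (hγ : γ + rhoC m = fun i => (x i : ℚ)) (r : ℕ) :
    ∑ᶠ lam ∈ {lam : Fin m → ℚ | DominantC lam}, (cPieri γ lam r : ℤ) • G (lam + rhoC m) =
      ∑ p ∈ interlacingPairs x r, G fun i => p.2 i := by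
  let unshift : (Fin m → ℤ) → Fin m → ℚ := fun z => (fun i => (z i : ℚ)) - rhoC m
  have unshift_add : ∀ z, unshift z + rhoC m = fun i => (z i : ℚ) := fun z =>
    sub_add_cancel _ _
  have cPieri_unshift : ∀ z, cPieri γ (unshift z) r = #{p ∈ interlacingPairs x r | p.2 = z} :=
    fun z => cPieri_eq_card_interlacingPairs hγ (unshift_add z) r
  have unshift_injective : Function.Injective unshift := fun z z' h => funext fun i => by
    simpa using congrFun (sub_left_injective h) i
  rw [finsum_mem_eq_sum_of_inter_support_eq _
    (t := ((interlacingPairs x r).image Prod.snd).image unshift) ?_,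
    sum_image unshift_injective.injOn, sum_comp (fun z : Fin m → ℤ => G fun i => z i)]
  · simp only [cPieri_unshift, unshift_add, natCast_zsmul]
  · ext lam
    simp only [Set.mem_inter_iff, Set.mem_ofPred_eq, Function.mem_support, and_congr_left_iff,
      coe_image, Set.mem_image, mem_coe, exists_exists_and_eq_and]
    intro hne
    constructor
    · rintro ⟨-, -, hint⟩
      choose w hw using hint
      obtain rfl : unshift (fun i => w i + ((i : ℕ) + 1)) = lam := funext fun i => by
        simp [unshift, rhoC, hw i]
      rw [cPieri_unshift] at hne
      obtain ⟨p, hp⟩ := card_ne_zero.1 fun h0 => hne (by rw [h0, Nat.cast_zero, zero_smul])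
      obtain ⟨hp, hp2⟩ := mem_filter.1 hp
      exact ⟨p, hp, by rw [hp2]⟩
    · rintro ⟨p, hp, rfl⟩
      obtain ⟨-, hpos, -, hz⟩ := mem_interlacingPairs.1 hp
      exact dominantC_sub_rhoC hz.strictMono_right (hpos.trans hz.1)

end PieriNumbers

section WeylAlternant

variable {A : Type*} [AddCommGroup A] {m : ℕ}

theorem wAct_wAct (σ τ : Equiv.Perm (Fin m)) (ε δ : Fin m → Bool) (x : Fin m → ℚ) :
    wAct σ ε (wAct τ δ x) = wAct (σ * τ) (fun i => xor (ε i) (δ (σ⁻¹ i))) x := by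
  have sign_xor : ∀ a b : Bool, (if xor a b then (-1 : ℚ) else 1) =
      (if a then -1 else 1) * if b then -1 else 1 := by rintro ⟨⟩ ⟨⟩ <;> simp
  funext i
  simp only [wAct, mul_inv_rev, Equiv.Perm.mul_apply, sign_xor, mul_assoc]

theorem wDet_mul_wDet (σ τ : Equiv.Perm (Fin m)) (ε δ : Fin m → Bool) :
    wDet σ ε * wDet τ δ = wDet (σ * τ) (fun i => xor (ε i) (δ (σ⁻¹ i))) := by
  have sign_xor : ∀ a b : Bool, (if xor a b then (-1 : ℤ) else 1) =
      (if a then -1 else 1) * if b then -1 else 1 := by decide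
  simp only [wDet, sign_xor, prod_mul_distrib, Equiv.Perm.sign_mul, Units.val_mul,
    Equiv.prod_comp σ⁻¹ fun i => if δ i then (-1 : ℤ) else 1]
  ring

theorem wDet_mul_self (σ : Equiv.Perm (Fin m)) (ε : Fin m → Bool) : wDet σ ε * wDet σ ε = 1 := by
  have sign_sq : ∀ a : Bool, (if a then (-1 : ℤ) else 1) * (if a then -1 else 1) = 1 := by decide
  rw [wDet, mul_mul_mul_comm, ← prod_mul_distrib, prod_congr rfl fun i _ => sign_sq (ε i),
    prod_const_one, mul_one, ← Units.val_mul, Int.units_mul_self, Units.val_one]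

/-- The alternating sum of `f` over the orbit of `x` under the Weyl group of type `C_m`. -/
def weylAlt (f : (Fin m → ℚ) → A) (x : Fin m → ℚ) : A :=
  ∑ σ : Equiv.Perm (Fin m), ∑ ε : Fin m → Bool, wDet σ ε • f (wAct σ ε x)

theorem KC_eq_weylAlt (lam mu : Fin m → ℚ) :
    KC m lam mu = weylAlt (fun v => kostantQ (rootsC m) (v - (mu + rhoC m))) (lam + rhoC m) :=
  rfl

theorem weylAlt_finset_sum {ι : Type*} (s : Finset ι) (F : ι → (Fin m → ℚ) → A)
    (x : Fin m → ℚ) : weylAlt (fun v => ∑ p ∈ s, F p v) x = ∑ p ∈ s, weylAlt (F p) x := by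
  simp only [weylAlt, smul_sum, sum_comm (t := s)]

theorem weylAlt_mul_left {R : Type*} [Ring R] (a : R) (f : (Fin m → ℚ) → R) (x : Fin m → ℚ) :
    weylAlt (fun v => a * f v) x = a * weylAlt f x := by
  simp only [weylAlt, mul_sum, mul_smul_comm]

theorem weylAlt_wAct (f : (Fin m → ℚ) → A) (τ : Equiv.Perm (Fin m)) (δ : Fin m → Bool)
    (x : Fin m → ℚ) : weylAlt f (wAct τ δ x) = wDet τ δ • weylAlt f x := by
  have term_eq : ∀ σ ε, wDet σ ε • f (wAct σ ε (wAct τ δ x)) =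
      wDet τ δ • wDet (σ * τ) (fun i => xor (ε i) (δ (σ⁻¹ i))) •
        f (wAct (σ * τ) (fun i => xor (ε i) (δ (σ⁻¹ i))) x) := fun σ ε => by
    rw [wAct_wAct, ← wDet_mul_wDet, smul_smul, mul_left_comm, wDet_mul_self, mul_one]
  have xor_involutive : ∀ d : Fin m → Bool,
      Function.Involutive fun (ε : Fin m → Bool) i => xor (ε i) (d i) := fun d ε => by
    simp
  simp only [weylAlt, term_eq, ← smul_sum]
  congr 1
  calc ∑ σ : Equiv.Perm (Fin m), ∑ ε : Fin m → Bool,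
        wDet (σ * τ) (fun i => xor (ε i) (δ (σ⁻¹ i))) •
          f (wAct (σ * τ) (fun i => xor (ε i) (δ (σ⁻¹ i))) x)
    _ = ∑ σ : Equiv.Perm (Fin m), ∑ ε : Fin m → Bool,
          wDet (σ * τ) ε • f (wAct (σ * τ) ε x) := sum_congr rfl fun σ _ =>
      (Equiv.sum_comp (xor_involutive fun i => δ (σ⁻¹ i)).toPerm
        fun ε => wDet (σ * τ) ε • f (wAct (σ * τ) ε x))
    _ = ∑ σ : Equiv.Perm (Fin m), ∑ ε : Fin m → Bool, wDet σ ε • f (wAct σ ε x) :=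
      Equiv.sum_comp (Equiv.mulRight τ)
        fun σ => ∑ ε : Fin m → Bool, wDet σ ε • f (wAct σ ε x)

theorem weylAlt_comp_swap (f : (Fin m → ℚ) → A) (x : Fin m → ℚ) {i j : Fin m} (hij : i ≠ j) :
    weylAlt f (x ∘ Equiv.swap i j) = -weylAlt f x := by
  have hx : x ∘ Equiv.swap i j = wAct (Equiv.swap i j) (fun _ => false) x := by
    funext l
    simp [wAct]
  rw [hx, weylAlt_wAct]
  simp [wDet, Equiv.Perm.sign_swap hij]

theorem weylAlt_update_neg (f : (Fin m → ℚ) → A) (x : Fin m → ℚ) (i : Fin m) :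
    weylAlt f (Function.update x i (-x i)) = -weylAlt f x := by
  have hx : Function.update x i (-x i) = wAct 1 (fun l => decide (l = i)) x := by
    funext l
    rcases eq_or_ne l i with rfl | hl
    · simp [wAct]
    · simp [wAct, hl]
  rw [hx, weylAlt_wAct]
  simp [wDet]

/-- The permutation of `Fin (m + 1)` fixing the last point and acting as `τ` on the others. -/
def permFixLast (τ : Equiv.Perm (Fin m)) : Equiv.Perm (Fin (m + 1)) :=
  finSuccEquivLast.symm.permCongr (Equiv.optionCongr τ)

theorem permFixLast_last (τ : Equiv.Perm (Fin m)) :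
    permFixLast τ (Fin.last m) = Fin.last m := by
  simp [permFixLast, Equiv.permCongr_apply]

theorem permFixLast_castSucc (τ : Equiv.Perm (Fin m)) (i : Fin m) :
    permFixLast τ i.castSucc = (τ i).castSucc := by
  simp [permFixLast, Equiv.permCongr_apply]

theorem sign_permFixLast (τ : Equiv.Perm (Fin m)) :
    Equiv.Perm.sign (permFixLast τ) = Equiv.Perm.sign τ := by
  rw [permFixLast, Equiv.Perm.sign_permCongr, Equiv.optionCongr_sign]

/-- The permutation moving `j` to the last place and permuting the other points, numbered in
increasing order, by `τ`. -/
def permOfLast (j : Fin (m + 1)) (τ : Equiv.Perm (Fin m)) : Equiv.Perm (Fin (m + 1)) :=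
  permFixLast τ * (Fin.cycleIcc j (Fin.last m))⁻¹

theorem permOfLast_inv_last (j : Fin (m + 1)) (τ : Equiv.Perm (Fin m)) :
    (permOfLast j τ)⁻¹ (Fin.last m) = j := by
  rw [Equiv.Perm.inv_eq_iff_eq, permOfLast, Equiv.Perm.mul_apply,
    Equiv.Perm.inv_eq_iff_eq.2 (Fin.cycleIcc_of_last (Fin.le_last j)).symm, permFixLast_last]

theorem permOfLast_inv_castSucc (j : Fin (m + 1)) (τ : Equiv.Perm (Fin m)) (i : Fin m) :
    (permOfLast j τ)⁻¹ i.castSucc = j.succAbove (τ⁻¹ i) := by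
  have cycle : Fin.cycleIcc j (Fin.last m) (τ⁻¹ i).castSucc = j.succAbove (τ⁻¹ i) := by
    rw [← Fin.cycleIcc_comp_succAbove j (Fin.last m) (Fin.le_last j), Fin.succAbove_last]
    rfl
  rw [Equiv.Perm.inv_eq_iff_eq, permOfLast, Equiv.Perm.mul_apply,
    Equiv.Perm.inv_eq_iff_eq.2 cycle.symm, permFixLast_castSucc,
    ← Equiv.Perm.mul_apply, mul_inv_cancel, Equiv.Perm.one_apply]

theorem sign_permOfLast (j : Fin (m + 1)) (τ : Equiv.Perm (Fin m)) :
    Equiv.Perm.sign (permOfLast j τ) = (-1) ^ (m - j : ℕ) * Equiv.Perm.sign τ := by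
  rw [permOfLast, Equiv.Perm.sign_mul, Equiv.Perm.sign_inv, sign_permFixLast,
    Fin.sign_cycleIcc_of_le (Fin.le_last j), Fin.val_last, mul_comm]

theorem permOfLast_bijective :
    Function.Bijective fun p : Fin (m + 1) × Equiv.Perm (Fin m) => permOfLast p.1 p.2 := by
  rw [Fintype.bijective_iff_injective_and_card]
  refine ⟨?_, by simp [Fintype.card_perm, Nat.factorial_succ]⟩
  rintro ⟨j, τ⟩ ⟨j', τ'⟩ (h : permOfLast j τ = permOfLast j' τ')
  obtain rfl : j = j' := by rw [← permOfLast_inv_last j τ, h, permOfLast_inv_last]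
  have inv_eq : ∀ i, τ⁻¹ i = τ'⁻¹ i := fun i => j.succAbove_right_injective <| by
    rw [← permOfLast_inv_castSucc, h, permOfLast_inv_castSucc]
  rw [inv_injective (Equiv.ext inv_eq)]

theorem wDet_permOfLast (j : Fin (m + 1)) (τ : Equiv.Perm (Fin m)) (ε : Fin m → Bool) (s : Bool) :
    wDet (permOfLast j τ) (Fin.snoc ε s : Fin (m + 1) → Bool) =
      (-1) ^ (m - j : ℕ) * (if s then -1 else 1) * wDet τ ε := by
  simp only [wDet, sign_permOfLast, Fin.prod_univ_castSucc, Fin.snoc_castSucc, Fin.snoc_last,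
    Units.val_mul, Units.val_pow_eq_pow_val, Units.val_neg, Units.val_one]
  ring

theorem wAct_permOfLast (j : Fin (m + 1)) (τ : Equiv.Perm (Fin m)) (ε : Fin m → Bool) (s : Bool)
    (x : Fin (m + 1) → ℚ) :
    wAct (permOfLast j τ) (Fin.snoc ε s : Fin (m + 1) → Bool) x =
      Fin.snoc (wAct τ ε (x ∘ j.succAbove)) ((if s then -1 else 1) * x j) := by
  funext i
  refine Fin.lastCases ?_ (fun i => ?_) i
  · simp only [wAct, Fin.snoc_last, permOfLast_inv_last]
  · simp only [wAct, Fin.snoc_castSucc, permOfLast_inv_castSucc, Function.comp]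

theorem weylAlt_succ (f : (Fin (m + 1) → ℚ) → A) (x : Fin (m + 1) → ℚ) :
    weylAlt f x = ∑ j : Fin (m + 1), (-1 : ℤ) ^ (m - j : ℕ) •
      (weylAlt (fun v => f (Fin.snoc v (x j))) (x ∘ j.succAbove) -
        weylAlt (fun v => f (Fin.snoc v (-x j))) (x ∘ j.succAbove)) := by
  have sum_signs : ∀ j τ, ∑ ε : Fin (m + 1) → Bool,
      wDet (permOfLast j τ) ε • f (wAct (permOfLast j τ) ε x) =
        (-1 : ℤ) ^ (m - j : ℕ) •
          (∑ ε : Fin m → Bool, wDet τ ε • f (Fin.snoc (wAct τ ε (x ∘ j.succAbove)) (x j)) -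
            ∑ ε : Fin m → Bool,
              wDet τ ε • f (Fin.snoc (wAct τ ε (x ∘ j.succAbove)) (-x j))) := fun j τ => by
    rw [← (Fin.snocEquiv fun _ => Bool).sum_comp, Fintype.sum_prod_type, Fintype.sum_bool]
    change ∑ ε : Fin m → Bool, wDet (permOfLast j τ) (Fin.snoc ε true : Fin (m + 1) → Bool) •
          f (wAct (permOfLast j τ) (Fin.snoc ε true : Fin (m + 1) → Bool) x) +
        ∑ ε : Fin m → Bool, wDet (permOfLast j τ) (Fin.snoc ε false : Fin (m + 1) → Bool) •
          f (wAct (permOfLast j τ) (Fin.snoc ε false : Fin (m + 1) → Bool) x) = _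
    simp only [wDet_permOfLast, wAct_permOfLast]
    simp [smul_sum, mul_smul, sub_eq_neg_add]
  simp only [weylAlt, ← (Equiv.ofBijective _ permOfLast_bijective).sum_comp,
    Equiv.ofBijective_apply, Fintype.sum_prod_type, sum_signs, ← smul_sum, sum_sub_distrib]

theorem exists_netShift_eq_wAct (σ : Equiv.Perm (Fin m)) (ε : Fin m → Bool) :
    ∃ e : Equiv.Perm (Fin m × Bool), ∀ ab : Fin m × Bool → ℕ,
      (netShift (ab ∘ e) : Fin m → ℚ) = wAct σ ε (netShift ab) := by
  refine ⟨⟨fun p => (σ⁻¹ p.1, xor p.2 (ε p.1)), fun p => (σ p.1, xor p.2 (ε (σ p.1))),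
    fun p => by simp, fun p => by simp⟩, fun ab => funext fun i => ?_⟩
  cases hε : ε i <;> simp [netShift, wAct, hε]

theorem weylAlt_sum_netShift (f : (Fin m → ℚ) → A) (x : Fin m → ℚ) (r : ℕ) :
    weylAlt (fun v => ∑ ab ∈ piAntidiag (univ : Finset (Fin m × Bool)) r, f (v + netShift ab)) x =
      ∑ ab ∈ piAntidiag (univ : Finset (Fin m × Bool)) r, weylAlt f (x + netShift ab) := by
  have wAct_add : ∀ σ ε, ∀ y z : Fin m → ℚ, wAct σ ε (y + z) = wAct σ ε y + wAct σ ε z :=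
    fun σ ε y z => funext fun i => mul_add ..
  have reindex : ∀ σ ε, ∑ ab ∈ piAntidiag (univ : Finset (Fin m × Bool)) r,
      f (wAct σ ε x + netShift ab) =
        ∑ ab ∈ piAntidiag (univ : Finset (Fin m × Bool)) r, f (wAct σ ε (x + netShift ab)) :=
    fun σ ε => by
      obtain ⟨e, he⟩ := exists_netShift_eq_wAct σ ε
      symm
      refine sum_equiv (e.symm.arrowCongr (Equiv.refl ℕ)) (fun ab => ?_) fun ab _ => ?_
      · simp only [mem_piAntidiag, mem_univ, implies_true, and_true]
        rw [← Equiv.sum_comp e ab]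
        rfl
      · rw [wAct_add, ← he]
        rfl
  simp only [weylAlt, reindex, smul_sum]
  symm
  rw [sum_comm]
  exact sum_congr rfl fun σ _ => sum_comm

end WeylAlternant

section KostantSeries

variable {τ τ' V : Type*} [Fintype τ] [DecidableEq τ] [Fintype τ'] [DecidableEq τ'] [DecidableEq V]

/-- The `q`-analogue of Kostant's partition function for an indexed family `w` of vectors of an
arbitrary additive monoid; an index family lets one split off some of the vectors. -/
def kostantSeries [AddCommMonoid V] (w : τ → V) (β : V) : PowerSeries ℤ :=
  PowerSeries.mk fun k => (#{f ∈ piAntidiag (univ : Finset τ) k | ∑ t, f t • w t = β} : ℤ)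

theorem kostantQ_eq_kostantSeries {n : ℕ} {R : Finset (Fin n → ℚ)} {w : τ → Fin n → ℚ}
    (hw : Function.Injective w) (hR : ∀ v, v ∈ R ↔ ∃ t, w t = v) (β : Fin n → ℚ) :
    kostantQ R β = kostantSeries w β := by
  obtain ⟨e, he⟩ : ∃ e : τ ≃ {α // α ∈ R}, ∀ t, (e t : Fin n → ℚ) = w t :=
    ⟨Equiv.ofBijective (fun t => ⟨w t, (hR _).2 ⟨t, rfl⟩⟩)
      ⟨fun a b h => hw (Subtype.ext_iff.1 h), fun ⟨v, hv⟩ => ((hR v).1 hv).imp fun t ht =>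
        Subtype.ext ht⟩, fun _ => rfl⟩
  ext k
  rw [kostantQ, kostantSeries, PowerSeries.coeff_mk, PowerSeries.coeff_mk, Nat.cast_inj,
    ← Nat.subtype_card _ fun f => by rw [mem_filter]]
  refine Nat.card_congr (Equiv.subtypeEquiv (e.symm.arrowCongr (Equiv.refl ℕ)) fun f => ?_)
  simp only [mem_piAntidiag, mem_univ, implies_true, and_true, ← e.sum_comp, he,
    Nat.cast_smul_eq_nsmul]
  rfl

theorem kostantSeries_comp_of_injective {V' : Type*} [AddCommMonoid V] [AddCommMonoid V']
    [DecidableEq V'] (φ : V →+ V') (hφ : Function.Injective φ) (w : τ → V) (β : V) :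
    kostantSeries (fun t => φ (w t)) (φ β) = kostantSeries w β := by
  simp only [kostantSeries, ← map_nsmul, ← map_sum, hφ.eq_iff]

theorem card_fiber_comp_inr [AddCommGroup V] (w : τ → V) (w' : τ' → V) (β : V) (g : τ' → ℕ)
    (k : ℕ) :
    #{h ∈ piAntidiag (univ : Finset (τ ⊕ τ')) k |
        ∑ t, h t • Sum.elim w w' t = β ∧ h ∘ Sum.inr = g} =
      if ∑ t, g t ≤ k then
        #{f ∈ piAntidiag (univ : Finset τ) (k - ∑ t, g t) |
          ∑ t, f t • w t = β - ∑ t, g t • w' t} else 0 := by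
  split_ifs with hk
  · refine card_nbij' (· ∘ Sum.inl) (Sum.elim · g) ?_ ?_ ?_ ?_
    · simp only [Set.MapsTo, coe_filter, mem_piAntidiag, mem_univ, implies_true, and_true,
        Set.mem_ofPred_eq, Fintype.sum_sum_type, Sum.elim_inl, Sum.elim_inr]
      rintro h ⟨hsum, hβ, rfl⟩
      exact ⟨Nat.eq_sub_of_add_eq hsum, eq_sub_of_add_eq hβ⟩
    · simp only [Set.MapsTo, coe_filter, mem_piAntidiag, mem_univ, implies_true, and_true,
        Set.mem_ofPred_eq, Fintype.sum_sum_type, Sum.elim_inl, Sum.elim_inr, Sum.elim_comp_inr]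
      rintro f ⟨hsum, hβ⟩
      exact ⟨by rw [hsum, Nat.sub_add_cancel hk], by rw [hβ, sub_add_cancel]⟩
    · simp only [Set.LeftInvOn, coe_filter, Set.mem_ofPred_eq]
      rintro h ⟨_, _, rfl⟩
      exact Sum.elim_comp_inl_inr h
    · exact fun f _ => rfl
  · simp only [card_eq_zero, filter_eq_empty_iff, mem_piAntidiag, Fintype.sum_sum_type]
    rintro h ⟨hsum, _⟩ ⟨_, rfl⟩
    exact hk (hsum ▸ Nat.le_add_left _ _)

theorem kostantSeries_sumElim [AddCommGroup V] (w : τ → V) (w' : τ' → V) (β : V)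
    (T : Finset (τ' → ℕ))
    (hT : ∀ (f : τ → ℕ) (g : τ' → ℕ), ∑ t, f t • w t + ∑ t, g t • w' t = β → g ∈ T) :
    kostantSeries (Sum.elim w w') β =
      ∑ g ∈ T, PowerSeries.X ^ (∑ t, g t) * kostantSeries w (β - ∑ t, g t • w' t) := by
  ext k
  have inr_mem : ∀ h ∈ {h ∈ piAntidiag (univ : Finset (τ ⊕ τ')) k |
      ∑ t, h t • Sum.elim w w' t = β}, h ∘ Sum.inr ∈ T := fun h hh =>
    hT (h ∘ Sum.inl) _ (by rw [← (mem_filter.1 hh).2, Fintype.sum_sum_type]; rfl)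
  simp only [kostantSeries, PowerSeries.coeff_mk, map_sum, PowerSeries.coeff_X_pow_mul',
    card_eq_sum_card_fiberwise inr_mem, filter_filter, card_fiber_comp_inr]
  push_cast
  rfl

end KostantSeries

section Roots

theorem kostantQ_eq_zero_of_neg {n : ℕ} {R : Finset (Fin n → ℚ)} {β : Fin n → ℚ} {i : Fin n}
    (hR : ∀ α ∈ R, 0 ≤ α i) (hβ : β i < 0) : kostantQ R β = 0 := by
  ext k
  rw [kostantQ, PowerSeries.coeff_mk, map_zero, Nat.cast_eq_zero, Nat.card_eq_zero]
  refine Or.inl ⟨fun ⟨f, _, hf⟩ => hβ.not_ge ?_⟩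
  rw [← hf, Finset.sum_apply]
  exact sum_nonneg fun α _ => mul_nonneg (Nat.cast_nonneg _) (hR α α.2)

variable {m : ℕ}

/-- The positive roots of type `C_{m+1}` involving the last coordinate: `(i, false)` stands for
`e_{m+1} - e_i`, `(i, true)` for `e_{m+1} + e_i`, and the remaining index for `2 e_{m+1}`. -/
def lastRoot : (Fin m × Bool) ⊕ Unit → (Fin (m + 1) → ℚ) :=
  Sum.elim (fun p => Fin.snoc (Pi.single p.1 (if p.2 then 1 else -1)) 1) fun _ => Fin.snoc 0 2

theorem mem_rootsC {n : ℕ} {v : Fin n → ℚ} : v ∈ rootsC n ↔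
    (∃ i j : Fin n, j < i ∧ v = Pi.single i 1 - Pi.single j 1) ∨
    (∃ i j : Fin n, j < i ∧ v = Pi.single i 1 + Pi.single j 1) ∨
    ∃ i : Fin n, v = Pi.single i 2 := by
  simp only [rootsC, rootsD, mem_union, mem_image, mem_filter, mem_univ, true_and, Prod.exists,
    or_assoc, eq_comm]

theorem single_castSucc_eq_snoc (i : Fin m) (c : ℚ) :
    (Pi.single i.castSucc c : Fin (m + 1) → ℚ) = Fin.snoc (Pi.single i c) 0 := by
  funext l
  refine Fin.lastCases ?_ (fun l => ?_) l <;> simp [Pi.single_apply, (Fin.castSucc_lt_last i).ne']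

theorem single_last_eq_snoc (c : ℚ) :
    (Pi.single (Fin.last m) c : Fin (m + 1) → ℚ) = Fin.snoc 0 c := by
  funext l
  refine Fin.lastCases ?_ (fun l => ?_) l <;> simp [(Fin.castSucc_lt_last _).ne]

theorem snoc_add_snoc (v w : Fin m → ℚ) (a b : ℚ) :
    (Fin.snoc v a + Fin.snoc w b : Fin (m + 1) → ℚ) = Fin.snoc (v + w) (a + b) := by
  funext l
  refine Fin.lastCases ?_ (fun l => ?_) l <;> simp

theorem snoc_sub_snoc (v w : Fin m → ℚ) (a b : ℚ) :
    (Fin.snoc v a - Fin.snoc w b : Fin (m + 1) → ℚ) = Fin.snoc (v - w) (a - b) := by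
  funext l
  refine Fin.lastCases ?_ (fun l => ?_) l <;> simp

theorem mem_rootsC_succ {v : Fin (m + 1) → ℚ} :
    v ∈ rootsC (m + 1) ↔ (∃ α ∈ rootsC m, Fin.snoc α 0 = v) ∨ ∃ t, lastRoot t = v := by
  have exists_lt_iff : ∀ P : Fin (m + 1) → Fin (m + 1) → Prop, (∃ i j, j < i ∧ P i j) ↔
      (∃ i j : Fin m, j < i ∧ P i.castSucc j.castSucc) ∨ ∃ j : Fin m, P (Fin.last m) j.castSucc :=
    fun P => by simp [Fin.exists_fin_succ', Fin.castSucc_lt_last, (Fin.castSucc_lt_last _).not_gt]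
  rw [mem_rootsC, exists_lt_iff, exists_lt_iff, Fin.exists_fin_succ']
  simp only [single_castSucc_eq_snoc, single_last_eq_snoc, snoc_add_snoc, snoc_sub_snoc]
  simp [mem_rootsC, lastRoot, or_and_right, exists_or, Pi.single_neg, eq_comm (a := v)]
  grind

/-- The embedding of the weights of rank `m` as the weights of rank `m + 1` with last
coordinate `0`. -/
def snocZeroHom : (Fin m → ℚ) →+ (Fin (m + 1) → ℚ) :=
  AddMonoidHom.mk' (fun v => Fin.snoc v 0) fun v w => by rw [snoc_add_snoc, add_zero]

theorem snocZeroHom_last (v : Fin m → ℚ) : snocZeroHom v (Fin.last m) = 0 :=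
  Fin.snoc_last (α := fun _ => ℚ) 0 v

theorem snocZeroHom_injective : Function.Injective (snocZeroHom (m := m)) :=
  fun v w h => (Fin.snoc_inj (α := fun _ => ℚ) (x := v) (y := w) |>.1 h).1

theorem lastRoot_injective : Function.Injective (lastRoot (m := m)) := by
  rintro (⟨i, s⟩ | u) (⟨j, t⟩ | u') h
  · have h' : (Pi.single i (if s then 1 else -1) : Fin m → ℚ) =
        Pi.single j (if t then 1 else -1) := by simpa [lastRoot] using h
    obtain rfl : i = j := by
      by_contra hij
      have := congrFun h' i
      cases s <;> simp [hij] at this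
    have signs_eq := Pi.single_injective _ h'
    obtain rfl : s = t := by
      revert signs_eq
      cases s <;> cases t <;> norm_num
    rfl
  · norm_num [lastRoot, Fin.snoc_inj] at h
  · norm_num [lastRoot, Fin.snoc_inj] at h
  · rfl

theorem sum_lastRoot (g : (Fin m × Bool) ⊕ Unit → ℕ) :
    ∑ t, g t • lastRoot t = Fin.snoc (-netShift (g ∘ Sum.inl))
      ((∑ p, g (Sum.inl p) : ℕ) + 2 * g (Sum.inr ()) : ℚ) := by
  simp only [Fintype.sum_sum_type, Fintype.sum_unique, lastRoot, Sum.elim_inl, Sum.elim_inr]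
  funext l
  refine Fin.lastCases ?_ (fun l => ?_) l
  · simp [mul_comm]
  · simp [netShift, Fintype.sum_prod_type, Pi.single_apply, sum_add_distrib, sub_eq_add_neg]

theorem kostantQ_rootsC_eq_kostantSeries (β : Fin m → ℚ) :
    kostantQ (rootsC m) β = kostantSeries (fun α : {α // α ∈ rootsC m} => (α : Fin m → ℚ)) β :=
  kostantQ_eq_kostantSeries Subtype.val_injective (fun v => by simp) β

theorem kostantQ_rootsC_succ_eq_kostantSeries (β : Fin (m + 1) → ℚ) :
    kostantQ (rootsC (m + 1)) β = kostantSeries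
      (Sum.elim (fun α : {α // α ∈ rootsC m} => snocZeroHom (α : Fin m → ℚ)) lastRoot) β := by
  refine kostantQ_eq_kostantSeries ?_ (fun v => ?_) β
  · refine (snocZeroHom_injective.comp Subtype.val_injective).sumElim lastRoot_injective
      fun α t h => ?_
    rcases t with p | u <;> norm_num [lastRoot, snocZeroHom, Fin.snoc_inj] at h
  · simp [mem_rootsC_succ, snocZeroHom]

/-- The families of multiplicities of the roots `lastRoot` for which the last coordinate of the
weighted sum is `N`. -/
def lastMultiplicities (m N : ℕ) : Finset ((Fin m × Bool) ⊕ Unit → ℕ) :=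
  ({p ∈ range (N + 1) ×ˢ range (N + 1) | p.1 + 2 * p.2 = N}.sigma fun p =>
    piAntidiag (univ : Finset (Fin m × Bool)) p.1).image fun q => Sum.elim q.2 fun _ => q.1.2

theorem mem_lastMultiplicities {N : ℕ} {g : (Fin m × Bool) ⊕ Unit → ℕ} :
    g ∈ lastMultiplicities m N ↔ ∑ p, g (Sum.inl p) + 2 * g (Sum.inr ()) = N := by
  simp only [lastMultiplicities, mem_image, mem_sigma, mem_filter, mem_product, mem_range,
    mem_piAntidiag, mem_univ, implies_true, and_true]
  constructor
  · rintro ⟨⟨p, ab⟩, ⟨⟨_, hp⟩, hab⟩, rfl⟩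
    simpa [hab] using hp
  · intro h
    exact ⟨⟨(∑ p, g (Sum.inl p), g (Sum.inr ())), g ∘ Sum.inl⟩,
      ⟨⟨⟨by dsimp only; omega, by dsimp only; omega⟩, h⟩, rfl⟩, Sum.elim_comp_inl_inr g⟩

theorem sum_lastMultiplicities {A : Type*} [AddCommMonoid A]
    (F : ((Fin m × Bool) ⊕ Unit → ℕ) → A) (N : ℕ) :
    ∑ g ∈ lastMultiplicities m N, F g = ∑ p ∈ range (N + 1) ×ˢ range (N + 1),
      if p.1 + 2 * p.2 = N then
        ∑ ab ∈ piAntidiag (univ : Finset (Fin m × Bool)) p.1, F (Sum.elim ab fun _ => p.2)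
      else 0 := by
  rw [lastMultiplicities, sum_image, sum_sigma, sum_filter]
  rintro ⟨⟨r, c⟩, ab⟩ h ⟨⟨r', c'⟩, ab'⟩ h' heq
  obtain rfl : ab = ab' := congrArg (· ∘ Sum.inl) heq
  obtain rfl : c = c' := congrFun heq (Sum.inr ())
  simp only [coe_sigma, Set.mem_sigma_iff, mem_coe, mem_filter, mem_piAntidiag] at h h'
  obtain rfl : r = r' := h.2.1.symm.trans h'.2.1
  rfl

theorem kostantQ_rootsC_succ (v : Fin m → ℚ) (N : ℕ) :
    kostantQ (rootsC (m + 1)) (Fin.snoc v N) = ∑ p ∈ range (N + 1) ×ˢ range (N + 1),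
      if p.1 + 2 * p.2 = N then
        PowerSeries.X ^ (p.1 + p.2) * ∑ ab ∈ piAntidiag (univ : Finset (Fin m × Bool)) p.1,
          kostantQ (rootsC m) (v + netShift ab)
      else 0 := by
  have mem : ∀ (f : {α // α ∈ rootsC m} → ℕ) (g : (Fin m × Bool) ⊕ Unit → ℕ),
      ∑ α, f α • snocZeroHom (α : Fin m → ℚ) + ∑ t, g t • lastRoot t = Fin.snoc v (N : ℚ) →
        g ∈ lastMultiplicities m N := fun f g h => by
    have last_coord := congrFun h (Fin.last m)
    simp only [sum_lastRoot, ← map_nsmul, ← map_sum, Pi.add_apply, snocZeroHom_last, Fin.snoc_last,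
      zero_add] at last_coord
    rw [mem_lastMultiplicities]
    exact_mod_cast last_coord
  rw [kostantQ_rootsC_succ_eq_kostantSeries, kostantSeries_sumElim _ _ _ _ mem,
    sum_lastMultiplicities]
  refine sum_congr rfl fun p _ => ite_congr rfl (fun hp => ?_) fun _ => rfl
  rw [mul_sum]
  refine sum_congr rfl fun ab hab => ?_
  have residual : Fin.snoc v (N : ℚ) - ∑ t, Sum.elim ab (fun _ => p.2) t • lastRoot t =
      snocZeroHom (v + netShift ab) := by
    simp only [sum_lastRoot, Sum.elim_comp_inl, Sum.elim_inl, Sum.elim_inr, snoc_sub_snoc,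
      (mem_piAntidiag.1 hab).1, sub_neg_eq_add]
    have hN : (p.1 + 2 * p.2 : ℚ) = N := by exact_mod_cast hp
    rw [hN, sub_self]
    rfl
  rw [residual, kostantSeries_comp_of_injective _ snocZeroHom_injective,
    ← kostantQ_rootsC_eq_kostantSeries, Fintype.sum_sum_type]
  simp [(mem_piAntidiag.1 hab).1]

theorem rootsC_succ_last_nonneg {α : Fin (m + 1) → ℚ} (hα : α ∈ rootsC (m + 1)) :
    0 ≤ α (Fin.last m) := by
  obtain ⟨_, _, rfl⟩ | ⟨t, rfl⟩ := mem_rootsC_succ.1 hα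
  · rw [Fin.snoc_last]
  · rcases t with p | u <;> simp [lastRoot]

end Roots

section Morris

variable {m : ℕ}

theorem DominantC.exists_add_rhoC_eq {γ : Fin m → ℚ} (hγ : DominantC γ) :
    ∃ x : Fin m → ℤ, StrictMono x ∧ (∀ i, 0 < x i) ∧ γ + rhoC m = fun i => (x i : ℚ) := by
  obtain ⟨hmono, hnonneg, hint⟩ := hγ
  choose w hw using hint
  obtain rfl : γ = fun i => (w i : ℚ) := funext hw
  have w_mono : Monotone w := fun i j hij => Int.cast_le.1 (hmono hij)
  have w_nonneg : ∀ i, 0 ≤ w i := fun i => Int.cast_nonneg_iff.1 (hnonneg i)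
  exact ⟨fun i => w i + (((i : ℕ) : ℤ) + 1),
    w_mono.add_strictMono fun i j hij => by simpa using hij,
    fun i => add_pos_of_nonneg_of_pos (w_nonneg i) (by positivity),
    funext fun i => by simp [rhoC]⟩

theorem weylAlt_pieri {A : Type*} [AddCommGroup A] [IsAddTorsionFree A] (f : (Fin m → ℚ) → A)
    {γ : Fin m → ℚ} (hγ : DominantC γ) (r : ℕ) :
    weylAlt (fun v => ∑ ab ∈ piAntidiag (univ : Finset (Fin m × Bool)) r, f (v + netShift ab))
        (γ + rhoC m) =
      ∑ᶠ lam ∈ {lam : Fin m → ℚ | DominantC lam},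
        (cPieri γ lam r : ℤ) • weylAlt f (lam + rhoC m) := by
  obtain ⟨x, x_strictMono, x_pos, hx⟩ := hγ.exists_add_rhoC_eq
  let F : (Fin m → ℤ) → A := fun z => weylAlt f fun i => z i
  have F_update_neg : ∀ z i, F (Function.update z i (-z i)) = -F z := fun z i => by
    refine Eq.trans (congrArg (weylAlt f) (funext fun k => ?_)) (weylAlt_update_neg f _ i)
    rcases eq_or_ne k i with rfl | hk
    · simp only [Function.update_self, Int.cast_neg]
    · simp only [Function.update_of_ne hk]
  have F_comp_swap : ∀ z i j, i ≠ j → F (z ∘ Equiv.swap i j) = -F z := fun z i j hij =>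
    weylAlt_comp_swap f (fun i => (z i : ℚ)) hij
  have F_shift : ∀ ab : Fin m × Bool → ℕ,
      weylAlt f (γ + rhoC m + netShift ab) = F (x + netShift ab) := fun ab => by
    refine congrArg (weylAlt f) (funext fun i => ?_)
    simp [hx, netShift]
  calc _ = ∑ ab ∈ piAntidiag (univ : Finset (Fin m × Bool)) r, F (x + netShift ab) := by
        simp only [weylAlt_sum_netShift, F_shift]
    _ = ∑ p ∈ interlacingPairs x r, F p.2 := by
        rw [sum_add_netShift_eq_sum_pieriPairs,
          sum_pieriPairs_eq_sum_interlacingPairs F_update_neg F_comp_swap x_strictMono x_pos]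
    _ = _ := (finsum_mem_dominantC_cPieri_smul (weylAlt f) hx r).symm

theorem weylAlt_kostantQ_snoc {γ : Fin m → ℚ} (hγ : DominantC γ) (mu : Fin m → ℚ) (N : ℕ) :
    weylAlt (fun v => kostantQ (rootsC (m + 1)) (Fin.snoc (v - (mu + rhoC m)) N)) (γ + rhoC m) =
      ∑ p ∈ range (N + 1) ×ˢ range (N + 1),
        if p.1 + 2 * p.2 = N then
          PowerSeries.X ^ (p.1 + p.2) *
            ∑ᶠ lam ∈ {lam : Fin m → ℚ | DominantC lam}, (cPieri γ lam p.1 : ℤ) • KC m lam mu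
        else 0 := by
  simp only [kostantQ_rootsC_succ, ← sum_filter]
  rw [weylAlt_finset_sum]
  refine sum_congr rfl fun p _ => ?_
  simp only [weylAlt_mul_left, sub_add_eq_add_sub, KC_eq_weylAlt]
  have : IsAddTorsionFree (PowerSeries ℤ) :=
    inferInstanceAs (IsAddTorsionFree ((Unit →₀ ℕ) → ℤ))
  rw [weylAlt_pieri (fun v => kostantQ (rootsC m) (v - (mu + rhoC m))) hγ]

theorem KC_succ (lam mu : Fin (m + 1) → ℚ) (hlam : ∀ j, 0 < (lam + rhoC (m + 1)) j)
    (hmu : 0 ≤ (mu + rhoC (m + 1)) (Fin.last m)) :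
    KC (m + 1) lam mu = ∑ j : Fin (m + 1), (-1 : ℤ) ^ (m - j : ℕ) •
      weylAlt (fun v => kostantQ (rootsC (m + 1)) (Fin.snoc (v - (Fin.init mu + rhoC m))
        ((lam + rhoC (m + 1)) j - (mu + rhoC (m + 1)) (Fin.last m))))
        ((lam + rhoC (m + 1)) ∘ j.succAbove) := by
  have snoc_sub : ∀ v c, (Fin.snoc v c - (mu + rhoC (m + 1)) : Fin (m + 1) → ℚ) =
      Fin.snoc (v - (Fin.init mu + rhoC m)) (c - (mu + rhoC (m + 1)) (Fin.last m)) := fun v c => by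
    rw [← snoc_sub_snoc]
    exact congrArg _ (Fin.snoc_init_self _).symm
  have neg_term : ∀ j v, kostantQ (rootsC (m + 1)) (Fin.snoc v
      (-(lam + rhoC (m + 1)) j - (mu + rhoC (m + 1)) (Fin.last m))) = 0 := fun j v =>
    kostantQ_eq_zero_of_neg (fun _ => rootsC_succ_last_nonneg) (by
      rw [Fin.snoc_last]
      linarith [hlam j])
  simp only [KC_eq_weylAlt, weylAlt_succ, snoc_sub, neg_term]
  simp [weylAlt]

/-- The weight `γ_k` of the Morris recurrence: the coordinate `ν_k` is deleted and the coordinates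
above it are raised by `1`. -/
def morrisWeight (ν : Fin (m + 1) → ℤ) (j : Fin (m + 1)) : Fin m → ℚ := fun i =>
  if (i : ℕ) < (j : ℕ) then (ν i.castSucc : ℚ) else (ν i.succ : ℚ) + 1

/-- The exponent `R_k = (ν + ρ)_k - (μ + ρ)_n` of the Morris recurrence for `n = m + 1`. -/
def morrisDegree (ν μ : Fin (m + 1) → ℤ) (j : Fin (m + 1)) : ℤ :=
  ν j + ((j : ℕ) : ℤ) + 1 - μ (Fin.last m) - ((m + 1 : ℕ) : ℤ)

theorem morrisWeight_add_rhoC (ν : Fin (m + 1) → ℤ) (j : Fin (m + 1)) :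
    morrisWeight ν j + rhoC m = ((fun i => (ν i : ℚ)) + rhoC (m + 1)) ∘ j.succAbove := by
  funext i
  by_cases h : (i : ℕ) < (j : ℕ)
  · simp [morrisWeight, rhoC, h, Fin.succAbove_of_castSucc_lt j i h]
  · simp only [Pi.add_apply, Function.comp_apply, morrisWeight, rhoC, if_neg h, Fin.val_succ,
      Fin.succAbove_of_le_castSucc j i (not_lt.1 h)]
    push_cast
    ring

theorem dominantC_morrisWeight {ν : Fin (m + 1) → ℤ} (hν : Monotone ν) (hν0 : ∀ i, 0 ≤ ν i)
    (j : Fin (m + 1)) : DominantC (morrisWeight ν j) := by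
  let x : Fin (m + 1) → ℤ := fun i => ν i + (((i : ℕ) : ℤ) + 1)
  have x_strictMono : StrictMono x := hν.add_strictMono fun i k hik => by simpa using hik
  have x_pos : 1 ≤ x := fun i => le_add_of_nonneg_of_le (hν0 i) (by simp)
  have weight_eq : morrisWeight ν j = (fun i => (x (j.succAbove i) : ℚ)) - rhoC m := by
    refine eq_sub_of_add_eq ((morrisWeight_add_rhoC ν j).trans (funext fun i => ?_))
    simp [x, rhoC]
  rw [weight_eq]
  exact dominantC_sub_rhoC (x_strictMono.comp j.strictMono_succAbove) fun i => x_pos _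

theorem morris_C_general (ν μ : Fin (m + 1) → ℤ) (hν : Monotone ν) (hν0 : ∀ i, 0 ≤ ν i)
    (hμ : 0 ≤ μ (Fin.last m) + (m + 1)) :
    KC (m + 1) (fun i => (ν i : ℚ)) (fun i => (μ i : ℚ)) =
      ∑ j : Fin (m + 1),
        if 0 ≤ morrisDegree ν μ j then
          (-1 : ℤ) ^ (m - j : ℕ) •
            ∑ p ∈ range ((morrisDegree ν μ j).toNat + 1) ×ˢ
                range ((morrisDegree ν μ j).toNat + 1),
              if p.1 + 2 * p.2 = (morrisDegree ν μ j).toNat then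
                (PowerSeries.X : PowerSeries ℤ) ^ (p.1 + p.2) *
                  ∑ᶠ lam ∈ {lam : Fin m → ℚ | DominantC lam},
                    (cPieri (morrisWeight ν j) lam p.1 : ℤ) •
                      KC m lam (Fin.init fun i => (μ i : ℚ))
              else 0
        else 0 := by
  rw [KC_succ _ _ (fun j => add_pos_of_nonneg_of_pos (by exact_mod_cast hν0 j)
    (Nat.cast_add_one_pos j)) (by simpa [rhoC] using mod_cast hμ)]
  refine sum_congr rfl fun j _ => ?_
  have degree_eq : ((fun i => (ν i : ℚ)) + rhoC (m + 1)) j -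
      ((fun i => (μ i : ℚ)) + rhoC (m + 1)) (Fin.last m) = (morrisDegree ν μ j : ℚ) := by
    simp only [Pi.add_apply, rhoC, morrisDegree, Fin.val_last]
    push_cast
    ring
  rw [degree_eq, ← morrisWeight_add_rhoC]
  split_ifs with hR
  · lift morrisDegree ν μ j to ℕ using hR with N
    rw [Int.cast_natCast, weylAlt_kostantQ_snoc (dominantC_morrisWeight hν hν0 j),
      Int.toNat_natCast]
  · have vanish : ∀ v, kostantQ (rootsC (m + 1)) (Fin.snoc v (morrisDegree ν μ j : ℚ)) = 0 :=
      fun v => kostantQ_eq_zero_of_neg (fun _ => rootsC_succ_last_nonneg) (by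
        rw [Fin.snoc_last]
        exact_mod_cast not_le.1 hR)
    simp [weylAlt, vanish]

end Morris

/-- Morris-type recurrence for type `C_n`:
`K^{C_n}_{ν,μ}(q) = ∑_{k, R_k ≥ 0} (-1)^{n-k} ∑_{r+2m=R_k} q^{R_k - m} ∑_λ c^λ_{γ_k,r} K^{C_{n-1}}_{λ,μ'}(q)`
(note `R_k - m = r + m`). -/
theorem morris_C (n : ℕ) (hn : 2 ≤ n) (ν μ : Fin n → ℤ)
    (hν : Monotone ν) (hν0 : ∀ i, 0 ≤ ν i)
    (hμ : Monotone μ) (hμ0 : ∀ i, 0 ≤ μ i) :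
    KC n (fun i => (ν i : ℚ)) (fun i => (μ i : ℚ)) =
      ∑ j : Fin n,
        if 0 ≤ ν j + ((j : ℕ) : ℤ) + 1 - μ ⟨n - 1, by omega⟩ - (n : ℤ) then
          ((-1 : ℤ) ^ (n - 1 - (j : ℕ))) •
            ∑ p ∈ Finset.range ((ν j + ((j : ℕ) : ℤ) + 1 - μ ⟨n - 1, by omega⟩ - (n : ℤ)).toNat + 1) ×ˢ
                  Finset.range ((ν j + ((j : ℕ) : ℤ) + 1 - μ ⟨n - 1, by omega⟩ - (n : ℤ)).toNat + 1),
              if p.1 + 2 * p.2 = (ν j + ((j : ℕ) : ℤ) + 1 - μ ⟨n - 1, by omega⟩ - (n : ℤ)).toNat then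
                (PowerSeries.X : PowerSeries ℤ) ^ (p.1 + p.2) *
                  ∑ᶠ lam ∈ {lam : Fin (n - 1) → ℚ | DominantC lam},
                    (cPieri
                        (fun i : Fin (n - 1) =>
                          if (i : ℕ) < (j : ℕ) then (ν ⟨(i : ℕ), by have := i.2; omega⟩ : ℚ)
                          else (ν ⟨(i : ℕ) + 1, by have := i.2; omega⟩ : ℚ) + 1)
                        lam p.1 : ℤ) •
                      KC (n - 1) lam (restrict1 fun i => (μ i : ℚ))
              else 0
        else 0 := by
  obtain ⟨m, rfl⟩ : ∃ m, n = m + 1 := ⟨n - 1, by omega⟩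
  exact morris_C_general ν μ hν hν0 (by linarith [hμ0 (Fin.last m)])
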